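/- Let D = (E; Φ) be a binary delta-matroid and e ∈ E. If e is not a coloop of D, then the deletion D ∖ e = (E∖{e}; {φ ∈ Φ : e ∉ φ}) is a binary delta-matroid; if e is not a loop of D, then the contraction D/e = (E∖{e}; {φ∖{e} : φ ∈ Φ, e ∈ φ}) is a binary delta-matroid. (Consequently the restriction of a binary delta-matroid to any subset of its ground set is a binary delta-matroid.) -/

import Mathlib

open scoped symmDiff

variable {α : Type*} [DecidableEq α]

/-- A (proper) delta-matroid: a nonempty collection `Φ` of subsets of the ground set `E`
satisfying the Symmetric Exchange Axiom. -/
def IsDeltaMatroid (E : Finset α) (Φ : Set (Finset α)) : Prop :=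
  Φ.Nonempty ∧ (∀ φ ∈ Φ, φ ⊆ E) ∧
    ∀ φ₁ ∈ Φ, ∀ φ₂ ∈ Φ, ∀ e ∈ φ₁ ∆ φ₂, ∃ e' ∈ φ₁ ∆ φ₂, φ₁ ∆ ({e, e'} : Finset α) ∈ Φ

/-- The principal submatrix of `A` with rows and columns indexed by `U`. -/
def principalSubmatrix (A : Matrix α α (ZMod 2)) (U : Finset α) :
    Matrix U U (ZMod 2) :=
  A.submatrix (fun i => (i : α)) (fun i => (i : α))

/-- `U` is nondegenerate for `A`: the principal submatrix `A_U` is invertible over `F₂`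
(the empty submatrix has determinant `1`, hence is invertible by convention). -/
def Nondeg (A : Matrix α α (ZMod 2)) (U : Finset α) : Prop :=
  IsUnit (principalSubmatrix A U).det

/-- Twist of a collection of feasible sets by a subset `T`:
`Φ * T = {φ ∆ T : φ ∈ Φ}`. -/
def twist (Φ : Set (Finset α)) (T : Finset α) : Set (Finset α) :=
  {ψ | ∃ φ ∈ Φ, ψ = φ ∆ T}

/-- A binary delta-matroid on ground set `E`: a twist of the nondegeneracy set system of a
symmetric matrix over `F₂` (the matrix is indexed by the ambient type; only its `E × E`
block is ever used, since only principal submatrices `A_U` with `U ⊆ E` occur). -/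
def IsBinaryDeltaMatroid (E : Finset α) (Φ : Set (Finset α)) : Prop :=
  ∃ (A : Matrix α α (ZMod 2)) (T : Finset α), A.IsSymm ∧ T ⊆ E ∧
    Φ = {ψ | ∃ U : Finset α, U ⊆ E ∧ Nondeg A U ∧ ψ = U ∆ T}

/-- Feasible sets of the deletion `D ∖ e`. -/
def delSet (Φ : Set (Finset α)) (e : α) : Set (Finset α) :=
  {φ ∈ Φ | e ∉ φ}

/-- Feasible sets of the contraction `D / e`. -/
def conSet (Φ : Set (Finset α)) (e : α) : Set (Finset α) :=
  {ψ | ∃ φ ∈ Φ, e ∈ φ ∧ ψ = φ.erase e}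

/-- Feasible sets of the handle slide (second Vassiliev move) of `a` over `b`:
`Φ ∆ {φ ∪ {a} : φ ⊆ E ∖ {a, b}, φ ∪ {b} ∈ Φ}`. -/
def slideSet (E : Finset α) (Φ : Set (Finset α)) (a b : α) : Set (Finset α) :=
  Φ ∆ {ψ | ∃ φ : Finset α, φ ⊆ E \ {a, b} ∧ φ ∪ {b} ∈ Φ ∧ ψ = φ ∪ {a}}

/-- Feasible sets of the first Vassiliev move (exchange of handle ends):
`D\'_{ab} = ((D * {b})~_{ab}) * {b}`. -/
def firstMove (E : Finset α) (Φ : Set (Finset α)) (a b : α) : Set (Finset α) :=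
  twist (slideSet E (twist Φ {b}) a b) {b}

/-!
Twisting by a subset of `E` preserves binary delta-matroids and `D / e = (D * {e}) ∖ e`, so only
deletion needs an argument. If the twisting set `T` of a representation avoids `e`, restricting the
representing matrix to `E ∖ {e}` represents `D ∖ e`. Such a `T` exists because every feasible set
can serve as the twisting set, by a principal pivot. Exchanging the rows in `S` between `A` and the
identity gives matrices `P` (rows in `S` from `A`) and `Q` (rows in `S` from the identity), with
`det P = det A_S`; if this is invertible, put `A * S = Q P⁻¹`. Replacing the rows of `A * S`
outside `U` by rows of the identity and multiplying by `P` gives Tucker's identity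
`det (A * S)_U * det A_S = det A_{U ∆ S}`, so the nondegenerate sets of `A * S` are those of `A`
twisted by `S`. Moreover `Pᵀ Q + Qᵀ P = Aᵀ + A` vanishes in characteristic two when `A` is
symmetric, whence `A * S` is symmetric too.
-/

section PrincipalPivot

variable {l m n ι R : Type*} [DecidableEq m] [DecidableEq ι]

/-- The matrix whose rows in `S` are those of `A` and whose remaining rows are those of `B`.
It expresses the pivot and the principal minors of a matrix without block decompositions. -/
def rowPiecewise (S : Finset m) (A B : Matrix m n R) : Matrix m n R :=
  Matrix.of (S.piecewise A.row B.row)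

lemma rowPiecewise_apply (S : Finset m) (A B : Matrix m n R) (i : m) (j : n) :
    rowPiecewise S A B i j = if i ∈ S then A i j else B i j := by
  by_cases hi : i ∈ S <;> simp [rowPiecewise, hi]

lemma rowPiecewise_mul [Fintype n] [NonUnitalNonAssocSemiring R] (S : Finset m)
    (A B : Matrix m n R) (C : Matrix n l R) :
    rowPiecewise S A B * C = rowPiecewise S (A * C) (B * C) := by
  ext i j
  by_cases hi : i ∈ S <;> simp [rowPiecewise_apply, Matrix.mul_apply, hi]

lemma rowPiecewise_rowPiecewise_swap (S U : Finset m) (A B : Matrix m n R) :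
    rowPiecewise U (rowPiecewise S B A) (rowPiecewise S A B) = rowPiecewise (U ∆ S) A B := by
  ext i j
  by_cases hU : i ∈ U <;> by_cases hS : i ∈ S <;>
    simp [rowPiecewise_apply, Finset.mem_symmDiff, hU, hS]

open Matrix in
lemma transpose_rowPiecewise_mul_add_swap [Fintype m] [NonUnitalNonAssocSemiring R] (S : Finset m)
    (A B : Matrix m n R) :
    (rowPiecewise S A B)ᵀ * rowPiecewise S B A + (rowPiecewise S B A)ᵀ * rowPiecewise S A B =
      Aᵀ * B + Bᵀ * A := by
  ext i j
  simp only [Matrix.add_apply, Matrix.mul_apply, Matrix.transpose_apply, ← Finset.sum_add_distrib]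
  refine Finset.sum_congr rfl fun k _ => ?_
  by_cases hk : k ∈ S <;> simp [rowPiecewise_apply, hk, add_comm]

variable [Fintype ι] [CommRing R]

/-- The principal pivot transform `A * S`. When the principal submatrix of `A` on `S` is
invertible, `y = A x` exactly when `A * S` maps `x` with its `S`-coordinates replaced by those of
`y` to `y` with its `S`-coordinates replaced by those of `x`. -/
noncomputable def principalPivot (A : Matrix ι ι R) (S : Finset ι) : Matrix ι ι R :=
  rowPiecewise S 1 A * (rowPiecewise S A 1)⁻¹

lemma det_rowPiecewise_one (A : Matrix ι ι R) (S : Finset ι) :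
    (rowPiecewise S A 1).det = (A.submatrix (↑) (↑) : Matrix S S R).det :=
  A.det_piecewise_one_eq_submatrix_det S

variable {A : Matrix ι ι R} {S : Finset ι}

lemma principalPivot_mul_rowPiecewise (hS : IsUnit (A.submatrix (↑) (↑) : Matrix S S R).det) :
    principalPivot A S * rowPiecewise S A 1 = rowPiecewise S 1 A :=
  Matrix.nonsing_inv_mul_cancel_right _ _ (by rwa [det_rowPiecewise_one])

theorem det_submatrix_principalPivot_mul (hS : IsUnit (A.submatrix (↑) (↑) : Matrix S S R).det)
    (U : Finset ι) :
    ((principalPivot A S).submatrix (↑) (↑) : Matrix U U R).det *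
        (A.submatrix (↑) (↑) : Matrix S S R).det =
      (A.submatrix (↑) (↑) : Matrix ↥(U ∆ S) ↥(U ∆ S) R).det := by
  simp only [← det_rowPiecewise_one]
  rw [← Matrix.det_mul, rowPiecewise_mul, principalPivot_mul_rowPiecewise hS, Matrix.one_mul,
    rowPiecewise_rowPiecewise_swap]

open Matrix in
theorem transpose_principalPivot_of_skew (hA : Aᵀ = -A)
    (hS : IsUnit (A.submatrix (↑) (↑) : Matrix S S R).det) :
    (principalPivot A S)ᵀ = -principalPivot A S := by
  set M := principalPivot A S
  set P := rowPiecewise S A 1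
  have hP : IsUnit P := by rwa [Matrix.isUnit_iff_isUnit_det, det_rowPiecewise_one]
  have hMP : M * P = rowPiecewise S 1 A := principalPivot_mul_rowPiecewise hS
  have congr_eq_zero : Pᵀ * (M + Mᵀ) * P = 0 := calc
    Pᵀ * (M + Mᵀ) * P = Pᵀ * (M * P) + (M * P)ᵀ * P := by
      rw [Matrix.transpose_mul, Matrix.mul_add, Matrix.add_mul, Matrix.mul_assoc Pᵀ M]
    _ = Aᵀ * 1 + 1ᵀ * A := by rw [hMP, transpose_rowPiecewise_mul_add_swap]
    _ = 0 := by simp [hA]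
  rw [hP.mul_left_eq_zero, ((Matrix.isUnit_transpose P).mpr hP).mul_right_eq_zero] at congr_eq_zero
  exact eq_neg_of_add_eq_zero_right congr_eq_zero

theorem isSymm_principalPivot [CharP R 2] (hA : A.IsSymm)
    (hS : IsUnit (A.submatrix (↑) (↑) : Matrix S S R).det) : (principalPivot A S).IsSymm := by
  have neg_eq (B : Matrix ι ι R) : -B = B := Matrix.ext fun i j => CharTwo.neg_eq (B i j)
  have hA' : A.transpose = -A := by rw [hA.eq, neg_eq]
  exact (transpose_principalPivot_of_skew hA' hS).trans (neg_eq _)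

end PrincipalPivot

section Nondegenerate

variable {ι : Type*} [DecidableEq ι]

lemma nondeg_submatrix_embedding_iff (A : Matrix α α (ZMod 2)) (f : ι ↪ α) (U : Finset ι) :
    Nondeg (A.submatrix f f) U ↔ Nondeg A (U.map f) := by
  have reindexed : principalSubmatrix (A.submatrix f f) U =
      (principalSubmatrix A (U.map f)).submatrix (Finset.equivMap f U) (Finset.equivMap f U) := rfl
  rw [Nondeg, reindexed, Matrix.det_submatrix_equiv_self, Nondeg]

lemma exists_isSymm_principalSubmatrix_eq {β : Type*} {E : Finset β} {M : Matrix E E (ZMod 2)}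
    (hM : M.IsSymm) : ∃ A : Matrix β β (ZMod 2), A.IsSymm ∧ principalSubmatrix A E = M := by
  classical
  let e : β ≃ {a // a ∈ E} ⊕ {a // a ∉ E} := (Equiv.sumCompl (· ∈ E)).symm
  refine ⟨(Matrix.fromBlocks M 0 0 0).submatrix e e,
    (hM.fromBlocks Matrix.transpose_zero Matrix.isSymm_zero).submatrix e, ?_⟩
  ext i j
  simp [principalSubmatrix, e]

lemma Nondeg.principalPivot_iff [Fintype ι] {A : Matrix ι ι (ZMod 2)} {S : Finset ι}
    (hS : Nondeg A S) (U : Finset ι) : Nondeg (principalPivot A S) U ↔ Nondeg A (U ∆ S) := by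
  have tucker : (principalSubmatrix (principalPivot A S) U).det * (principalSubmatrix A S).det =
      (principalSubmatrix A (U ∆ S)).det := det_submatrix_principalPivot_mul hS U
  exact (and_iff_left hS).symm.trans (by rw [Nondeg, Nondeg, Nondeg, ← tucker, IsUnit.mul_iff])

theorem Nondeg.exists_isSymm_nondeg_iff_symmDiff {A : Matrix α α (ZMod 2)} {E S : Finset α}
    (hS : Nondeg A S) (hA : A.IsSymm) (hSE : S ⊆ E) :
    ∃ A' : Matrix α α (ZMod 2), A'.IsSymm ∧ ∀ U ⊆ E, (Nondeg A' U ↔ Nondeg A (U ∆ S)) := by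
  let f : E ↪ α := .subtype (· ∈ E)
  have exists_preimage {U : Finset α} (hU : U ⊆ E) : ∃ V : Finset E, V.map f = U :=
    ⟨U.subtype (· ∈ E), Finset.subtype_map_of_mem hU⟩
  have map_symmDiff (U V : Finset E) : (U ∆ V).map f = U.map f ∆ V.map f := by
    simp only [Finset.map_eq_image, Finset.image_symmDiff _ _ f.injective]
  obtain ⟨S, rfl⟩ := exists_preimage hSE
  have hAE : (principalSubmatrix A E).IsSymm := hA.submatrix _
  have hS' : Nondeg (principalSubmatrix A E) S := (nondeg_submatrix_embedding_iff A f S).mpr hS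
  obtain ⟨A', hA', hA'E⟩ := exists_isSymm_principalSubmatrix_eq (isSymm_principalPivot hAE hS')
  refine ⟨A', hA', fun U hU => ?_⟩
  obtain ⟨U, rfl⟩ := exists_preimage hU
  calc Nondeg A' (U.map f)
    _ ↔ Nondeg (principalSubmatrix A' E) U := (nondeg_submatrix_embedding_iff A' f U).symm
    _ ↔ Nondeg (principalSubmatrix A E) (U ∆ S) := by rw [hA'E, hS'.principalPivot_iff]
    _ ↔ Nondeg A ((U ∆ S).map f) := nondeg_submatrix_embedding_iff A f (U ∆ S)
    _ ↔ Nondeg A (U.map f ∆ S.map f) := by rw [map_symmDiff]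

end Nondegenerate

section BinaryDeltaMatroid

variable {E T : Finset α} {Φ : Set (Finset α)} {e : α}

lemma symmDiff_subset {U V : Finset α} (hU : U ⊆ E) (hV : V ⊆ E) : U ∆ V ⊆ E :=
  Finset.symmDiff_subset_union.trans (Finset.union_subset hU hV)

/-- `A` represents `(E; Φ)` with twisting set `T`: the defining condition of a binary delta-matroid
with the twist moved onto the feasible sets, so that membership in `Φ` needs no existential. -/
def IsRepresentedBy (E : Finset α) (Φ : Set (Finset α)) (A : Matrix α α (ZMod 2))
    (T : Finset α) : Prop :=
  A.IsSymm ∧ T ⊆ E ∧ ∀ ψ, ψ ∈ Φ ↔ ψ ⊆ E ∧ Nondeg A (ψ ∆ T)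

lemma isBinaryDeltaMatroid_iff_exists_isRepresentedBy :
    IsBinaryDeltaMatroid E Φ ↔ ∃ A T, IsRepresentedBy E Φ A T := by
  refine exists₂_congr fun A T => and_congr_right fun _ => and_congr_right fun hT => ?_
  rw [Set.ext_iff]
  refine forall_congr' fun ψ => iff_congr Iff.rfl ⟨?_, fun ⟨hψ, hA⟩ => ?_⟩
  · rintro ⟨U, hU, hA, rfl⟩
    exact ⟨symmDiff_subset hU hT, by rwa [symmDiff_symmDiff_cancel_right]⟩
  · exact ⟨ψ ∆ T, symmDiff_subset hψ hT, hA, (symmDiff_symmDiff_cancel_right T ψ).symm⟩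

theorem IsBinaryDeltaMatroid.exists_isRepresentedBy_of_mem (hD : IsBinaryDeltaMatroid E Φ)
    (hT : T ∈ Φ) : ∃ A, IsRepresentedBy E Φ A T := by
  obtain ⟨A, T₀, hA, hT₀, hΦ⟩ := isBinaryDeltaMatroid_iff_exists_isRepresentedBy.mp hD
  obtain ⟨hTE, hS⟩ := (hΦ T).mp hT
  obtain ⟨A', hA', hpivot⟩ :=
    hS.exists_isSymm_nondeg_iff_symmDiff hA (symmDiff_subset hTE hT₀)
  refine ⟨A', hA', hTE, fun ψ => (hΦ ψ).trans (and_congr_right fun hψ => ?_)⟩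
  rw [hpivot _ (symmDiff_subset hψ hTE), ← symmDiff_assoc, symmDiff_symmDiff_cancel_right]

theorem IsBinaryDeltaMatroid.delSet (hD : IsBinaryDeltaMatroid E Φ) (he : ∃ φ ∈ Φ, e ∉ φ) :
    IsBinaryDeltaMatroid (E.erase e) (delSet Φ e) := by
  obtain ⟨T, hT, heT⟩ := he
  obtain ⟨A, hA, hTE, hΦ⟩ := hD.exists_isRepresentedBy_of_mem hT
  refine isBinaryDeltaMatroid_iff_exists_isRepresentedBy.mpr
    ⟨A, T, hA, Finset.subset_erase.mpr ⟨hTE, heT⟩, fun ψ => ?_⟩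
  rw [_root_.delSet, Set.mem_sep_iff, hΦ, Finset.subset_erase, and_right_comm]

theorem IsBinaryDeltaMatroid.twist (hD : IsBinaryDeltaMatroid E Φ) (hT : T ⊆ E) :
    IsBinaryDeltaMatroid E (twist Φ T) := by
  obtain ⟨A, T₀, hA, hT₀, rfl⟩ := hD
  refine ⟨A, T₀ ∆ T, hA, symmDiff_subset hT₀ hT, Set.ext fun ψ => ⟨?_, ?_⟩⟩
  · rintro ⟨_, ⟨U, hU, hUA, rfl⟩, rfl⟩
    exact ⟨U, hU, hUA, symmDiff_assoc U T₀ T⟩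
  · rintro ⟨U, hU, hUA, rfl⟩
    exact ⟨U ∆ T₀, ⟨U, hU, hUA, rfl⟩, (symmDiff_assoc U T₀ T).symm⟩

lemma notMem_symmDiff_singleton {φ : Finset α} : e ∉ φ ∆ {e} ↔ e ∈ φ := by
  simp [Finset.mem_symmDiff]

lemma symmDiff_singleton_of_mem {φ : Finset α} (he : e ∈ φ) : φ ∆ {e} = φ.erase e := by
  grind [Finset.mem_symmDiff]

lemma conSet_eq_delSet_twist (Φ : Set (Finset α)) (e : α) :
    conSet Φ e = delSet (twist Φ {e}) e := by
  ext ψ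
  constructor
  · rintro ⟨φ, hφ, he, rfl⟩
    exact ⟨⟨φ, hφ, (symmDiff_singleton_of_mem he).symm⟩, Finset.notMem_erase e φ⟩
  · rintro ⟨⟨φ, hφ, rfl⟩, he⟩
    rw [notMem_symmDiff_singleton] at he
    exact ⟨φ, hφ, he, symmDiff_singleton_of_mem he⟩

theorem IsBinaryDeltaMatroid.conSet (hD : IsBinaryDeltaMatroid E Φ) (heE : e ∈ E)
    (he : ∃ φ ∈ Φ, e ∈ φ) : IsBinaryDeltaMatroid (E.erase e) (conSet Φ e) := by
  obtain ⟨φ, hφ, heφ⟩ := he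
  rw [conSet_eq_delSet_twist]
  exact (hD.twist (Finset.singleton_subset_iff.mpr heE)).delSet
    ⟨φ ∆ {e}, ⟨φ, hφ, rfl⟩, notMem_symmDiff_singleton.mpr heφ⟩

end BinaryDeltaMatroid

/-- Deletion of a non-coloop and contraction of a non-loop of a binary
delta-matroid are binary delta-matroids (hence so is the restriction to any subset). -/
theorem deletion_contraction_isBinaryDeltaMatroid {α : Type*} [DecidableEq α]
    (E : Finset α) (Φ : Set (Finset α)) (e : α)
    (hD : IsBinaryDeltaMatroid E Φ) (he : e ∈ E) :
    ((∃ φ ∈ Φ, e ∉ φ) → IsBinaryDeltaMatroid (E.erase e) (delSet Φ e)) ∧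
    ((∃ φ ∈ Φ, e ∈ φ) → IsBinaryDeltaMatroid (E.erase e) (conSet Φ e)) := by
  exact ⟨hD.delSet, hD.conSet he⟩
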